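/- arXiv:1010.1922 — 5 statements merged into one kernel-verified Lean document; each statement's English description precedes it below -/
import Mathlib

section
/- Let K be a finite abstract simplicial complex on {1,…,m}, let n ∈ ℕ, and let rk : F(K) → {0,1,…,n} be a function. Assume that for every σ ∈ K: if σ ∈ F(K) then f_{link_K σ}(−1) = (−1)^{n − rk(σ)}, and if σ ∉ F(K) then f_{link_K σ}(−1) = 0. Then, as polynomials in ℤ[t], f_K(t) = Σ_{σ ∈ F(K)} (−1)^{n − rk(σ)} (t+1)^{|σ|}. (These hypotheses encode the paper's notion of a polytopic complex of rank n: in such a complex the link of a face simplex σ deformation retracts onto a sphere S^{n−rk(σ)−1} and the link of a non-face simplex is contractible; since f_L(−1) = 1 − χ(L) for any simplicial complex L, these topological conditions yield exactly the stated values of f_{link σ}(−1).) -/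
/-! Write `t = (t + 1) - 1` and expand each `t^|ρ|` by the binomial theorem over subsets:
`t^|ρ| = Σ_{σ ⊆ ρ} (t + 1)^|σ| (-1)^|ρ \ σ|`. Exchanging the two sums, the coefficient of
`(t + 1)^|σ|` is `Σ_{σ ⊆ ρ ∈ K} (-1)^|ρ \ σ|`, which is `f_{link σ}(-1)` because `ρ ↦ ρ \ σ` is a
bijection from the simplices containing `σ` to the link of `σ`. This gives
`f_K(t) = Σ_{σ ∈ K} f_{link σ}(-1) (t + 1)^|σ|` for every simplicial complex `K`
(`fPoly_eq_sum_link`), and the hypotheses of the theorem state exactly the values of the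
coefficients. -/

noncomputable section
open scoped Classical
open Polynomial

/-- `K` is a (finite abstract) simplicial complex on the vertex set `Fin m`:
it contains the empty set and is closed under taking subsets. -/
def IsSimplicialComplex {m : ℕ} (K : Finset (Finset (Fin m))) : Prop :=
  ∅ ∈ K ∧ ∀ σ ∈ K, ∀ τ ⊆ σ, τ ∈ K

/-- The f-polynomial `f_K(t) = Σ_{σ ∈ K} t^|σ|`. -/
def fPoly {m : ℕ} (K : Finset (Finset (Fin m))) : Polynomial ℤ :=
  ∑ σ ∈ K, Polynomial.X ^ σ.card

/-- The link of `σ` in `K`: all `τ` disjoint from `σ` with `τ ∪ σ ∈ K`. -/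
def linkK {m : ℕ} (K : Finset (Finset (Fin m))) (σ : Finset (Fin m)) :
    Finset (Finset (Fin m)) :=
  Finset.univ.filter fun τ => τ ∩ σ = ∅ ∧ τ ∪ σ ∈ K

/-- `σ` is a maximal (under inclusion) simplex of `K`. -/
def IsMaxSimplex {m : ℕ} (K : Finset (Finset (Fin m))) (σ : Finset (Fin m)) : Prop :=
  σ ∈ K ∧ ∀ τ ∈ K, σ ⊆ τ → σ = τ

/-- `σ` is a face simplex of `K`: an intersection of a nonempty collection of
maximal simplices of `K`. -/
def IsFaceSimplex {m : ℕ} (K : Finset (Finset (Fin m))) (σ : Finset (Fin m)) : Prop :=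
  ∃ S : Finset (Finset (Fin m)), S.Nonempty ∧ (∀ τ ∈ S, IsMaxSimplex K τ) ∧ σ = S.inf id

/-- The set `F(K)` of face simplices of `K`, as a finset. -/
def faceSimplices {m : ℕ} (K : Finset (Finset (Fin m))) : Finset (Finset (Fin m)) :=
  Finset.univ.filter fun σ => IsFaceSimplex K σ

/-- `ρ ↦ ρ \ σ` identifies the simplices containing `σ` with the link of `σ`. -/
lemma eval_fPoly_linkK {m : ℕ} (K : Finset (Finset (Fin m))) (σ : Finset (Fin m)) :
    (fPoly (linkK K σ)).eval (-1) = ∑ ρ ∈ K with σ ⊆ ρ, (-1 : ℤ) ^ (ρ \ σ).card := by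
  simp only [fPoly, eval_finsetSum, eval_pow, eval_X]
  symm
  refine Finset.sum_nbij' (fun ρ => ρ \ σ) (fun τ => τ ∪ σ) ?_ ?_ ?_ ?_ (fun _ _ => rfl)
  · intro ρ hρ
    rw [Finset.mem_filter] at hρ
    simp [linkK, Finset.union_eq_left.mpr hρ.2, hρ.1]
  · intro τ hτ
    simp only [linkK, Finset.mem_filter, Finset.mem_univ, true_and] at hτ
    simp [hτ.2]
  · intro ρ hρ
    exact Finset.sdiff_union_of_subset (Finset.mem_filter.mp hρ).2
  · intro τ hτ
    simp only [linkK, Finset.mem_filter, Finset.mem_univ, true_and] at hτ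
    exact Finset.union_sdiff_cancel_right (Finset.disjoint_iff_inter_eq_empty.mpr hτ.1)

/-- The Taylor expansion of the f-polynomial at `t = -1`, valid for every simplicial complex. -/
lemma fPoly_eq_sum_link {m : ℕ} {K : Finset (Finset (Fin m))} (hK : IsSimplicialComplex K) :
    fPoly K = ∑ σ ∈ K, C ((fPoly (linkK K σ)).eval (-1)) * (X + 1) ^ σ.card := by
  have expand : ∀ ρ : Finset (Fin m), (X : Polynomial ℤ) ^ ρ.card =
      ∑ σ ∈ ρ.powerset, (X + 1) ^ σ.card * (-1) ^ (ρ \ σ).card := by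
    intro ρ
    have h := Finset.prod_add (fun _ : Fin m => (X + 1 : Polynomial ℤ)) (fun _ => -1) ρ
    simpa using h
  simp only [eval_fPoly_linkK, map_sum, Finset.sum_mul]
  rw [fPoly, Finset.sum_congr rfl fun ρ _ => expand ρ]
  rw [Finset.sum_comm' (s' := fun σ => K.filter (σ ⊆ ·)) (t' := K)]
  · refine Finset.sum_congr rfl fun σ _ => Finset.sum_congr rfl fun ρ _ => ?_
    simp [mul_comm]
  · intro ρ σ
    simp only [Finset.mem_powerset, Finset.mem_filter]
    exact ⟨fun h => ⟨h, hK.2 ρ h.1 σ h.2⟩, fun h => h.1⟩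

lemma IsFaceSimplex.mem {m : ℕ} {K : Finset (Finset (Fin m))} (hK : IsSimplicialComplex K)
    {σ : Finset (Fin m)} (hσ : IsFaceSimplex K σ) : σ ∈ K := by
  obtain ⟨S, ⟨τ, hτ⟩, hS, rfl⟩ := hσ
  exact hK.2 τ (hS τ hτ).1 _ (Finset.inf_le (f := id) hτ)

/-- If `K` is a polytopic complex of rank `n` — encoded by the values of
`f_{link σ}(-1)`: the link of a face simplex `σ` is (up to homotopy) a sphere
`S^{n - rk σ - 1}` and the link of a non-face simplex is contractible — then
`f_K(t) = Σ_{σ ∈ F(K)} (-1)^{n - rk σ} (t+1)^{|σ|}`. -/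
theorem fPoly_of_polytopic_complex (m n : ℕ) (K : Finset (Finset (Fin m)))
    (hK : IsSimplicialComplex K)
    (rk : Finset (Fin m) → ℕ)
    (hrk : ∀ σ, IsFaceSimplex K σ → rk σ ≤ n)
    (hface : ∀ σ ∈ K, IsFaceSimplex K σ →
      (fPoly (linkK K σ)).eval (-1) = (-1) ^ (n - rk σ))
    (hnonface : ∀ σ ∈ K, ¬ IsFaceSimplex K σ →
      (fPoly (linkK K σ)).eval (-1) = 0) :
    fPoly K = ∑ σ ∈ faceSimplices K,
      (-1 : Polynomial ℤ) ^ (n - rk σ) * (Polynomial.X + 1) ^ σ.card := by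
  have hsub : faceSimplices K ⊆ K := fun σ hσ => (Finset.mem_filter.mp hσ).2.mem hK
  rw [fPoly_eq_sum_link hK, ← Finset.sum_subset hsub]
  · refine Finset.sum_congr rfl fun σ hσ => ?_
    rw [hface σ (hsub hσ) (Finset.mem_filter.mp hσ).2]
    simp
  · intro σ hσ hσF
    rw [hnonface σ hσ fun h => hσF (Finset.mem_filter.mpr ⟨Finset.mem_univ σ, h⟩)]
    simp
end
end

section
/- Let P ⊂ ℝ^n be a convex polytope as in the context. Then, as polynomials in ℤ[t], Σ_{S ⊆ {1,…,m}, ⋂_{i∈S} F_i ≠ ∅} t^{|S|} = Σ_F (−1)^{dim F} (t+1)^{m(F)}, where the right-hand sum runs over all nonempty faces F of P including P itself. Equivalently, f_{K_P}(t) = F_P(−1, t+1), where F_P(α,t) = Σ_F α^{dim F} t^{m(F)} is the two-dimensional face polynomial of P. -/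
/-!
Write `σ̃(F)` for the set of facets containing a face `F`. Expanding `(t + 1) ^ m(F)` as
`∑_{S ⊆ σ̃(F)} t ^ |S|` and exchanging the sums, the coefficient attached to `S` on the right-hand
side is `∑ (-1) ^ dim F` over the nonempty faces `F` contained in `F_S = ⋂_{i ∈ S} F_i`. Since `F_S`
is itself a compact polytope or empty, Euler's relation says that this coefficient is `1` if `F_S`
is nonempty and `0` otherwise, which is the left-hand side.

Faces are handled through their relative interiors (`cell`): the cell of `T` is the set where exactly
the constraints in `T` are tight. Nonempty cells correspond to faces (`facePolynomial_eq`), and the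
cells with `T ⊇ S` partition `F_S` (`iUnion_cell`).

Euler's relation (`euler_relation`) is proved for any partition of a compact convex set into
relatively open convex cells, by Hadwiger's slicing argument. For a function `h` on the line
consider the Euler integral `∑ₜ (h(t) - h(t⁺))`, which is additive in `h`. Given a linear functional
`f`, the number `(-1) ^ dim C` is the Euler integral of `t ↦ (-1) ^ dim (C ∩ {f = t})`
(`hasJumpSum_chi`). Summing over cells, the integrand becomes, by induction on dimension, the
indicator function of the compact interval `f(P)`, whose Euler integral is `1`.
-/

noncomputable section
open scoped Classical

/-- The convex polytope `P = {x : ⟨a i, x⟩ + b i ≥ 0 for all i}` in `ℝⁿ`. -/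
def polytope (n m : ℕ) (a : Fin m → Fin n → ℝ) (b : Fin m → ℝ) : Set (Fin n → ℝ) :=
  {x | ∀ i, 0 ≤ (∑ j, a i j * x j) + b i}

/-- The `i`-th facet `F i = {x ∈ P : ⟨a i, x⟩ + b i = 0}`. -/
def facet (n m : ℕ) (a : Fin m → Fin n → ℝ) (b : Fin m → ℝ) (i : Fin m) : Set (Fin n → ℝ) :=
  {x | x ∈ polytope n m a b ∧ (∑ j, a i j * x j) + b i = 0}

/-- Dimension of the affine span of a subset of `ℝⁿ`. -/
def sdim {n : ℕ} (F : Set (Fin n → ℝ)) : ℕ :=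
  Module.finrank ℝ (affineSpan ℝ F).direction

/-- The face of `P` cut out by the facets indexed by `S` (`S = ∅` gives `P` itself). -/
def faceOf (n m : ℕ) (a : Fin m → Fin n → ℝ) (b : Fin m → ℝ) (S : Finset (Fin m)) :
    Set (Fin n → ℝ) :=
  polytope n m a b ∩ ⋂ i ∈ S, facet n m a b i

/-- The finset of all nonempty faces of `P` (including `P` itself). -/
def facesFinset (n m : ℕ) (a : Fin m → Fin n → ℝ) (b : Fin m → ℝ) :
    Finset (Set (Fin n → ℝ)) :=
  (Finset.univ.filter fun S : Finset (Fin m) => (faceOf n m a b S).Nonempty).image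
    (faceOf n m a b)

/-- `m(F)`: the number of facets of `P` containing `F`. -/
def mOf (n m : ℕ) (a : Fin m → Fin n → ℝ) (b : Fin m → ℝ) (F : Set (Fin n → ℝ)) : ℕ :=
  (Finset.univ.filter fun i => F ⊆ facet n m a b i).card

/-! ### Euler integration on the line -/

open Filter Topology in
/-- The Euler integral `∑ₜ (h(t) - h(t⁺))` of a function `h` on the line exists and equals `c`.
The right limit `h(t⁺)` is encoded by evaluating at `t + ε` for small `ε > 0`, and the sum over all
`t` by sums over sufficiently large finite sets. -/
def HasJumpSum (h : ℝ → ℤ) (c : ℤ) : Prop :=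
  ∀ᶠ T : Finset ℝ in atTop, ∀ᶠ ε in 𝓝[>] (0 : ℝ), ∑ t ∈ T, (h t - h (t + ε)) = c

open Filter Topology in
theorem HasJumpSum.unique {h : ℝ → ℤ} {c d : ℤ} (hc : HasJumpSum h c) (hd : HasJumpSum h d) :
    c = d := by
  obtain ⟨T, h1, h2⟩ := (Filter.Eventually.and hc hd).exists
  obtain ⟨ε, h1, h2⟩ := (h1.and h2).exists
  exact h1.symm.trans h2

open Filter Topology in
theorem HasJumpSum.sum {ι : Type*} [Fintype ι] {h : ι → ℝ → ℤ} {c : ι → ℤ}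
    (H : ∀ s, HasJumpSum (h s) (c s)) : HasJumpSum (fun t => ∑ s, h s t) (∑ s, c s) := by
  filter_upwards [Filter.eventually_all.2 H] with T hT
  filter_upwards [Filter.eventually_all.2 hT] with ε hε
  simp_rw [← Finset.sum_sub_distrib]
  rw [Finset.sum_comm]
  exact Finset.sum_congr rfl fun s _ => hε s

open Filter Topology in
/-- If `h(t) - h(t⁺)` vanishes except for the value `c` at `t₀`, the Euler integral is `c`. -/
theorem hasJumpSum_of_single {h : ℝ → ℤ} {c : ℤ} (t₀ : ℝ)
    (H : ∀ t, ∀ᶠ ε in 𝓝[>] (0 : ℝ), h t - h (t + ε) = if t = t₀ then c else 0) :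
    HasJumpSum h c := by
  filter_upwards [Filter.eventually_ge_atTop {t₀}] with T hT
  filter_upwards [(Filter.eventually_all_finset T).2 fun t _ => H t] with ε hε
  rw [Finset.sum_congr rfl hε, Finset.sum_ite_eq' T t₀, if_pos (hT (Finset.mem_singleton_self _))]

open Filter Topology in
theorem eventually_small {r : ℝ} (hr : 0 < r) : ∀ᶠ ε in 𝓝[>] (0 : ℝ), 0 < ε ∧ ε < r :=
  Ioo_mem_nhdsGT hr

open Filter Topology in
theorem hasJumpSum_point (a : ℝ) (c : ℤ) : HasJumpSum (fun t => if t = a then c else 0) c := by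
  refine hasJumpSum_of_single a fun t => ?_
  rcases lt_or_ge t a with h | h
  · filter_upwards [eventually_small (sub_pos.2 h)] with ε hε
    rw [if_neg h.ne, if_neg (by linarith [hε.2] : t + ε < a).ne, sub_zero]
  · filter_upwards [eventually_small one_pos] with ε hε
    have h' : a < t + ε := by linarith [hε.1]
    rw [if_neg h'.ne', sub_zero]

open Filter Topology in
theorem hasJumpSum_Ioo {a b : ℝ} (hab : a < b) (c : ℤ) :
    HasJumpSum (fun t => if t ∈ Set.Ioo a b then -c else 0) c := by
  refine hasJumpSum_of_single a fun t => ?_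
  simp only [Set.mem_Ioo]
  rcases lt_trichotomy t a with h | h | h
  · filter_upwards [eventually_small (sub_pos.2 h)] with ε hε
    rw [if_neg (by intro h'; linarith), if_neg (by intro h'; linarith [h'.1]), if_neg h.ne,
      sub_zero]
  · subst h
    filter_upwards [eventually_small (sub_pos.2 hab)] with ε hε
    rw [if_neg (by simp), if_pos ⟨by linarith, by linarith⟩, if_pos rfl]
    ring
  · rcases lt_or_ge t b with h2 | h2
    · filter_upwards [eventually_small (sub_pos.2 h2)] with ε hε
      rw [if_pos ⟨h, h2⟩, if_pos ⟨by linarith, by linarith⟩, if_neg h.ne', sub_self]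
    · filter_upwards [eventually_small one_pos] with ε hε
      rw [if_neg (by intro h'; linarith), if_neg (by intro h'; linarith), if_neg h.ne', sub_self]

open Filter Topology in
theorem hasJumpSum_Icc {a b : ℝ} (hab : a ≤ b) :
    HasJumpSum (fun t => if t ∈ Set.Icc a b then 1 else 0) 1 := by
  refine hasJumpSum_of_single b fun t => ?_
  simp only [Set.mem_Icc]
  rcases lt_trichotomy t b with h | h | h
  · rcases lt_or_ge t a with h2 | h2
    · filter_upwards [eventually_small (sub_pos.2 h2)] with ε hε
      rw [if_neg (by intro h'; linarith), if_neg (by intro h'; linarith), if_neg h.ne, sub_self]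
    · filter_upwards [eventually_small (sub_pos.2 h)] with ε hε
      rw [if_pos ⟨h2, h.le⟩, if_pos ⟨by linarith, by linarith⟩, if_neg h.ne, sub_self]
  · subst h
    filter_upwards [eventually_small one_pos] with ε hε
    rw [if_pos ⟨hab, le_rfl⟩, if_neg (by intro h'; linarith), if_pos rfl, sub_zero]
  · filter_upwards [eventually_small one_pos] with ε hε
    rw [if_neg (by intro h'; linarith), if_neg (by intro h'; linarith), if_neg h.ne', sub_self]

/-! ### Relatively open convex cells and their slices -/

/-- A relatively open convex set, presented as the intersection of an affine subspace with an open
convex set. The empty set is allowed. -/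
def RelOpen {n : ℕ} (C : Set (Fin n → ℝ)) : Prop :=
  ∃ (A : AffineSubspace ℝ (Fin n → ℝ)) (U : Set (Fin n → ℝ)),
    IsOpen U ∧ Convex ℝ U ∧ C = (A : Set (Fin n → ℝ)) ∩ U

/-- The Euler characteristic with compact support of a single cell `C`: `(-1) ^ dim C`, and `0` if
`C` is empty. -/
def chi {n : ℕ} (C : Set (Fin n → ℝ)) : ℤ := if C.Nonempty then (-1) ^ sdim C else 0

theorem RelOpen.convex {n : ℕ} {C : Set (Fin n → ℝ)} (h : RelOpen C) : Convex ℝ C := by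
  obtain ⟨A, U, -, hU, rfl⟩ := h
  exact A.convex.inter hU

theorem exists_add_smul_mem {n : ℕ} {A : AffineSubspace ℝ (Fin n → ℝ)} {U : Set (Fin n → ℝ)}
    (hU : IsOpen U) {p v : Fin n → ℝ} (hpA : p ∈ A) (hpU : p ∈ U) (hv : v ∈ A.direction) :
    ∃ δ > 0, ∀ s : ℝ, |s| < δ → p + s • v ∈ (A : Set (Fin n → ℝ)) ∩ U := by
  have hc : Continuous fun s : ℝ => p + s • v := by fun_prop
  have hm : (fun s : ℝ => p + s • v) ⁻¹' U ∈ nhds (0 : ℝ) :=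
    (hU.preimage hc).mem_nhds (by simpa using hpU)
  obtain ⟨δ, hδ, h⟩ := Metric.mem_nhds_iff.1 hm
  refine ⟨δ, hδ, fun s hs => ⟨?_, h (by simpa [Real.dist_eq] using hs)⟩⟩
  have := A.vadd_mem_of_mem_direction (A.direction.smul_mem s hv) hpA
  rwa [vadd_eq_add, add_comm] at this

theorem direction_affineSpan_inter {n : ℕ} {A : AffineSubspace ℝ (Fin n → ℝ)}
    {U : Set (Fin n → ℝ)} (hU : IsOpen U) {p : Fin n → ℝ} (hpA : p ∈ A) (hpU : p ∈ U) :
    (affineSpan ℝ ((A : Set (Fin n → ℝ)) ∩ U)).direction = A.direction := by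
  apply le_antisymm
  · exact AffineSubspace.direction_le (affineSpan_le.2 Set.inter_subset_left)
  · intro v hv
    obtain ⟨δ, hδ, h⟩ := exists_add_smul_mem hU hpA hpU hv
    have h1 := subset_affineSpan ℝ _ (h (δ / 2) (by rw [abs_of_pos (by linarith)]; linarith))
    have h0 := subset_affineSpan ℝ _ (show p ∈ (A : Set (Fin n → ℝ)) ∩ U from ⟨hpA, hpU⟩)
    have h2 := AffineSubspace.vsub_mem_direction h1 h0
    rw [vsub_eq_sub, add_sub_cancel_left] at h2
    exact (Submodule.smul_mem_iff _ (by linarith : δ / 2 ≠ 0)).1 h2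

theorem finrank_inf_ker {n : ℕ} (W : Submodule ℝ (Fin n → ℝ)) (f : (Fin n → ℝ) →ₗ[ℝ] ℝ)
    {v : Fin n → ℝ} (hv : v ∈ W) (hf : f v ≠ 0) :
    Module.finrank ℝ (W ⊓ LinearMap.ker f : Submodule ℝ (Fin n → ℝ)) + 1
      = Module.finrank ℝ W := by
  have h := (f.domRestrict W).finrank_range_add_finrank_ker
  have hr : LinearMap.range (f.domRestrict W) = ⊤ := by
    rw [LinearMap.range_eq_top]
    exact LinearMap.surjective (f := f.domRestrict W) (fun h0 => hf (by
      simpa using LinearMap.congr_fun h0 ⟨v, hv⟩))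
  have hk : Module.finrank ℝ (LinearMap.ker (f.domRestrict W)) =
      Module.finrank ℝ (W ⊓ LinearMap.ker f : Submodule ℝ (Fin n → ℝ)) := by
    rw [LinearMap.ker_domRestrict]
    have := (Submodule.equivMapOfInjective W.subtype W.injective_subtype
      ((LinearMap.ker f).comap W.subtype)).finrank_eq
    rw [Submodule.map_comap_subtype] at this
    exact this
  rw [hr, finrank_top, Module.finrank_self, hk] at h
  omega

theorem level_eq {n : ℕ} (A : AffineSubspace ℝ (Fin n → ℝ)) (U : Set (Fin n → ℝ))
    (f : (Fin n → ℝ) →ₗ[ℝ] ℝ) (p : Fin n → ℝ) :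
    (A : Set (Fin n → ℝ)) ∩ U ∩ f ⁻¹' {f p} =
      ((A ⊓ AffineSubspace.mk' p (LinearMap.ker f) : AffineSubspace ℝ (Fin n → ℝ)) :
        Set (Fin n → ℝ)) ∩ U := by
  ext x
  simp only [Set.mem_inter_iff, SetLike.mem_coe, AffineSubspace.mem_inf_iff,
    AffineSubspace.mem_mk', LinearMap.mem_ker, vsub_eq_sub, map_sub, sub_eq_zero,
    Set.mem_preimage, Set.mem_singleton_iff]
  tauto

theorem RelOpen.slice {n : ℕ} {C : Set (Fin n → ℝ)} (h : RelOpen C)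
    (f : (Fin n → ℝ) →ₗ[ℝ] ℝ) (t : ℝ) : RelOpen (C ∩ f ⁻¹' {t}) := by
  by_cases ht : ∃ p, f p = t
  · obtain ⟨p, rfl⟩ := ht
    obtain ⟨A, U, h1, h2, rfl⟩ := h
    exact ⟨_, U, h1, h2, level_eq A U f p⟩
  · refine ⟨⊥, Set.univ, isOpen_univ, convex_univ, ?_⟩
    ext x
    simp only [Set.mem_inter_iff, Set.mem_preimage, Set.mem_singleton_iff,
      AffineSubspace.bot_coe, Set.mem_empty_iff_false, false_and, iff_false]
    exact fun hx => ht ⟨x, hx.2⟩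

/-- The Euler characteristic of a bounded cell is the Euler integral of the Euler characteristics of
its slices by a linear functional `f`. Either `f` is constant on the cell, or its image is a bounded
open interval and every slice over it has dimension one less than the cell. -/
theorem hasJumpSum_chi {n : ℕ} {C : Set (Fin n → ℝ)} (hC : RelOpen C)
    (hb : Bornology.IsBounded C) (f : (Fin n → ℝ) →ₗ[ℝ] ℝ) :
    HasJumpSum (fun t => chi (C ∩ f ⁻¹' {t})) (chi C) := by
  rcases C.eq_empty_or_nonempty with rfl | ⟨p, hp⟩
  · have h0 : chi (∅ : Set (Fin n → ℝ)) = 0 := by simp [chi]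
    simpa [h0] using hasJumpSum_point 0 0
  have hconv := hC.convex
  obtain ⟨A, U, hUo, hUc, rfl⟩ := hC
  by_cases hf : ∀ v ∈ A.direction, f v = 0
  · convert hasJumpSum_point (f p) (chi ((A : Set (Fin n → ℝ)) ∩ U)) using 2 with t
    have hcst : ∀ x ∈ (A : Set (Fin n → ℝ)) ∩ U, f x = f p := fun x hx => by
      have := hf _ (AffineSubspace.vsub_mem_direction hx.1 hp.1)
      rwa [vsub_eq_sub, map_sub, sub_eq_zero] at this
    split_ifs with ht
    · congr 1
      ext x
      exact ⟨fun h => h.1, fun h => ⟨h, by simpa [ht] using hcst x h⟩⟩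
    · rw [chi, if_neg]
      rintro ⟨x, hx, hxt⟩
      exact ht (by rw [← hcst x hx]; exact (Set.mem_singleton_iff.1 hxt).symm)
  push Not at hf
  obtain ⟨v, hv, hfv⟩ := hf
  set C : Set (Fin n → ℝ) := (A : Set (Fin n → ℝ)) ∩ U with hCdef
  have hIb : Bornology.IsBounded (f '' C) := by
    have := (LinearMap.toContinuousLinearMap f).lipschitz.isBounded_image hb
    simpa using this
  have hIne : (f '' C).Nonempty := ⟨f p, p, hp, rfl⟩
  have hImOpen : IsOpen (f '' C) := by
    rw [Metric.isOpen_iff]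
    rintro _ ⟨x, hx, rfl⟩
    obtain ⟨δ, hδ, h⟩ := exists_add_smul_mem hUo hx.1 hx.2 hv
    refine ⟨δ * |f v|, by positivity, fun y hy => ?_⟩
    refine ⟨x + ((y - f x) / f v) • v, h _ ?_, ?_⟩
    · rw [abs_div, div_lt_iff₀ (by positivity)]
      simpa [Real.dist_eq] using hy
    · simp [hfv]
  have hIpre : IsPreconnected (f '' C) := (hconv.linear_image f).isPreconnected
  have hI : f '' C = Set.Ioo (sInf (f '' C)) (sSup (f '' C)) := by
    apply Set.Subset.antisymm
    · rw [← interior_Icc, hImOpen.subset_interior_iff]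
      exact subset_Icc_csInf_csSup hIb.bddBelow hIb.bddAbove
    · exact IsConnected.Ioo_csInf_csSup_subset ⟨hIne, hIpre⟩ hIb.bddBelow hIb.bddAbove
  have hlt : sInf (f '' C) < sSup (f '' C) := by
    have := hIne
    rw [hI] at this
    exact Set.nonempty_Ioo.1 this
  convert hasJumpSum_Ioo hlt (chi C) using 2 with t
  simp only [← hI]
  split_ifs with ht
  · obtain ⟨q, hq, rfl⟩ := ht
    have hqm : q ∈ AffineSubspace.mk' q (LinearMap.ker f) := AffineSubspace.self_mem_mk' _ _
    rw [chi, if_pos ⟨q, hq, rfl⟩, chi, if_pos ⟨q, hq⟩]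
    have h1 : sdim (C ∩ f ⁻¹' {f q}) + 1 = sdim C := by
      rw [hCdef, level_eq, sdim, sdim,
        direction_affineSpan_inter hUo (AffineSubspace.mem_inf_iff _ _ _ |>.2 ⟨hq.1, hqm⟩) hq.2,
        direction_affineSpan_inter hUo hq.1 hq.2, AffineSubspace.direction_inf_of_mem hq.1 hqm,
        AffineSubspace.direction_mk']
      exact finrank_inf_ker _ f hv hfv
    rw [← h1, pow_succ]
    ring
  · rw [chi, if_neg]
    rintro ⟨x, hx, hxt⟩
    exact ht ⟨x, hx, hxt⟩

/-! ### Euler's relation -/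

/-- Euler's relation: if a nonempty compact convex set is partitioned into finitely many relatively
open convex cells, then `∑ (-1) ^ dim = 1`. The induction is on the dimension of an affine subspace
`B` containing the set, slicing by a linear functional that is not constant on `B`. -/
theorem euler_relation {n : ℕ} {ι : Type*} [Fintype ι] (d : ℕ) :
    ∀ (B : AffineSubspace ℝ (Fin n → ℝ)) (C : ι → Set (Fin n → ℝ)),
      Module.finrank ℝ B.direction = d → (∀ s, RelOpen (C s)) →
      Pairwise (fun s t => Disjoint (C s) (C t)) → IsCompact (⋃ s, C s) → Convex ℝ (⋃ s, C s) →
      (⋃ s, C s) ⊆ B → (⋃ s, C s).Nonempty → ∑ s, chi (C s) = 1 := by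
  induction d with
  | zero =>
    intro B C hB hC hdisj hcomp hconv hsub ⟨p, hp⟩
    have hall : ∀ x ∈ ⋃ s, C s, x = p := fun x hx => by
      have h1 := AffineSubspace.vsub_mem_direction (hsub hx) (hsub hp)
      rw [Submodule.finrank_eq_zero.1 hB, Submodule.mem_bot, vsub_eq_sub, sub_eq_zero] at h1
      exact h1
    obtain ⟨s, hs⟩ := Set.mem_iUnion.1 hp
    rw [Finset.sum_eq_single s]
    · have : C s = {p} := Set.eq_singleton_iff_unique_mem.2
        ⟨hs, fun x hx => hall x (Set.mem_iUnion.2 ⟨s, hx⟩)⟩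
      rw [this, chi, if_pos (Set.singleton_nonempty p), sdim]
      rw [direction_affineSpan, vectorSpan_singleton, finrank_bot, pow_zero]
    · intro t _ hts
      rw [chi, if_neg]
      rintro ⟨x, hx⟩
      have hxp := hall x (Set.mem_iUnion.2 ⟨t, hx⟩)
      subst hxp
      exact Set.disjoint_left.1 (hdisj hts) hx hs
    · simp
  | succ d ih =>
    intro B C hB hC hdisj hcomp hconv hsub hne
    obtain ⟨v, hv, hv0⟩ : ∃ v ∈ B.direction, v ≠ 0 := by
      apply Submodule.exists_mem_ne_zero_of_ne_bot
      intro h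
      rw [h, finrank_bot] at hB
      omega
    obtain ⟨j, hj⟩ := Function.ne_iff.1 hv0
    let f : (Fin n → ℝ) →ₗ[ℝ] ℝ := LinearMap.proj j
    have hfv : f v ≠ 0 := hj
    have hcont : Continuous f := f.continuous_of_finiteDimensional
    have hIconn : IsConnected (f '' ⋃ s, C s) :=
      ⟨hne.image f, (hconv.linear_image f).isPreconnected⟩
    have hI := eq_Icc_of_connected_compact hIconn (hcomp.image hcont)
    have hle : sInf (f '' ⋃ s, C s) ≤ sSup (f '' ⋃ s, C s) := by
      have := hIconn.nonempty
      rw [hI] at this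
      exact Set.nonempty_Icc.1 this
    have hslice : ∀ t, ∑ s, chi (C s ∩ f ⁻¹' {t}) = if t ∈ f '' ⋃ s, C s then 1 else 0 := by
      intro t
      have hU : ⋃ s, (C s ∩ f ⁻¹' {t}) = (⋃ s, C s) ∩ f ⁻¹' {t} := by rw [Set.iUnion_inter]
      split_ifs with ht
      · obtain ⟨q, hq, rfl⟩ := ht
        have hqm : q ∈ AffineSubspace.mk' q (LinearMap.ker f) := AffineSubspace.self_mem_mk' _ _
        refine ih (B ⊓ AffineSubspace.mk' q (LinearMap.ker f)) _ ?_ (fun s => (hC s).slice f _)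
          (fun s t hst => (hdisj hst).mono Set.inter_subset_left Set.inter_subset_left) ?_ ?_ ?_ ?_
        · have := finrank_inf_ker B.direction f hv hfv
          rw [AffineSubspace.direction_inf_of_mem (hsub hq) hqm, AffineSubspace.direction_mk']
          omega
        · rw [hU]
          exact hcomp.inter_right (isClosed_singleton.preimage hcont)
        · rw [hU]
          exact hconv.inter ((convex_singleton _).linear_preimage f)
        · rw [hU]
          have := level_eq B Set.univ f q
          rw [Set.inter_univ, Set.inter_univ] at this
          rw [← this]
          exact Set.inter_subset_inter_left _ hsub
        · rw [hU]
          exact ⟨q, hq, rfl⟩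
      · refine Finset.sum_eq_zero fun s _ => ?_
        rw [chi, if_neg]
        rintro ⟨x, hx, hxt⟩
        exact ht ⟨x, Set.mem_iUnion.2 ⟨s, hx⟩, hxt⟩
    have h1 : HasJumpSum (fun t => ∑ s, chi (C s ∩ f ⁻¹' {t})) (∑ s, chi (C s)) :=
      HasJumpSum.sum fun s =>
        hasJumpSum_chi (hC s) (hcomp.isBounded.subset (Set.subset_iUnion C s)) f
    have h2 : HasJumpSum (fun t => ∑ s, chi (C s ∩ f ⁻¹' {t})) 1 := by
      convert hasJumpSum_Icc hle using 2 with t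
      rw [hslice t]
      simp only [← hI]
    exact h1.unique h2

/-! ### Faces and cells of the polytope -/

/-- The relatively open cell of `P` on which exactly the constraints indexed by `T` are tight. -/
def cell (n m : ℕ) (a : Fin m → Fin n → ℝ) (b : Fin m → ℝ) (T : Finset (Fin m)) :
    Set (Fin n → ℝ) :=
  {x | (∀ i ∈ T, (∑ j, a i j * x j) + b i = 0) ∧ ∀ i ∉ T, 0 < (∑ j, a i j * x j) + b i}

/-- The affine subspace on which all constraints indexed by `T` are tight. -/
def tightSpace (n m : ℕ) (a : Fin m → Fin n → ℝ) (b : Fin m → ℝ) (T : Finset (Fin m)) :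
    AffineSubspace ℝ (Fin n → ℝ) where
  carrier := {x | ∀ i ∈ T, (∑ j, a i j * x j) + b i = 0}
  smul_vsub_vadd_mem' := by
    intro c p₁ p₂ p₃ h1 h2 h3 i hi
    have e : (∑ j, a i j * (c • (p₁ -ᵥ p₂) +ᵥ p₃) j) + b i =
        c * (((∑ j, a i j * p₁ j) + b i) - ((∑ j, a i j * p₂ j) + b i)) +
          ((∑ j, a i j * p₃ j) + b i) := by
      rw [add_sub_add_right_eq_sub, ← Finset.sum_sub_distrib, Finset.mul_sum, ← add_assoc,
        ← Finset.sum_add_distrib]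
      congr 1
      refine Finset.sum_congr rfl fun j _ => ?_
      simp only [vsub_eq_sub, vadd_eq_add, Pi.add_apply, Pi.smul_apply, Pi.sub_apply, smul_eq_mul]
      ring
    rw [e, h1 i hi, h2 i hi, h3 i hi]
    ring

/-- The open convex set on which no constraint outside `T` is tight or violated. -/
def slackSet (n m : ℕ) (a : Fin m → Fin n → ℝ) (b : Fin m → ℝ) (T : Finset (Fin m)) :
    Set (Fin n → ℝ) :=
  {x | ∀ i ∉ T, 0 < (∑ j, a i j * x j) + b i}

section Faces

variable {n m : ℕ} {a : Fin m → Fin n → ℝ} {b : Fin m → ℝ}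

theorem constraint_combo (i : Fin m) (x y : Fin n → ℝ) {r s : ℝ} (hrs : r + s = 1) :
    (∑ j, a i j * (r • x + s • y) j) + b i =
      r * ((∑ j, a i j * x j) + b i) + s * ((∑ j, a i j * y j) + b i) := by
  have e : ∑ j, a i j * (r • x + s • y) j = r * (∑ j, a i j * x j) + s * ∑ j, a i j * y j := by
    rw [Finset.mul_sum, Finset.mul_sum, ← Finset.sum_add_distrib]
    refine Finset.sum_congr rfl fun j _ => ?_
    simp only [Pi.add_apply, Pi.smul_apply, smul_eq_mul]
    ring
  rw [e]
  linear_combination (-b i) * hrs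

theorem isOpen_slackSet (T : Finset (Fin m)) : IsOpen (slackSet n m a b T) := by
  have : slackSet n m a b T = ⋂ i ∈ Tᶜ, {x | 0 < (∑ j, a i j * x j) + b i} := by
    ext x; simp [slackSet]
  rw [this]
  refine isOpen_biInter_finset fun i _ => isOpen_lt continuous_const ?_
  fun_prop

theorem convex_slackSet (T : Finset (Fin m)) : Convex ℝ (slackSet n m a b T) := by
  intro x hx y hy r s hr hs hrs i hi
  rw [constraint_combo i x y hrs]
  have h1 := hx i hi
  have h2 := hy i hi
  rcases hr.eq_or_lt with rfl | hr
  · have : s = 1 := by linarith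
    subst this
    simpa using h2
  · have := mul_pos hr h1
    have := mul_nonneg hs h2.le
    linarith

theorem cell_eq (T : Finset (Fin m)) :
    cell n m a b T = (tightSpace n m a b T : Set (Fin n → ℝ)) ∩ slackSet n m a b T := rfl

theorem relOpen_cell (T : Finset (Fin m)) : RelOpen (cell n m a b T) :=
  ⟨_, _, isOpen_slackSet T, convex_slackSet T, cell_eq T⟩

theorem mem_faceOf {S : Finset (Fin m)} {x : Fin n → ℝ} :
    x ∈ faceOf n m a b S ↔
      (∀ i, 0 ≤ (∑ j, a i j * x j) + b i) ∧ ∀ i ∈ S, (∑ j, a i j * x j) + b i = 0 := by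
  simp only [faceOf, facet, polytope, Set.mem_inter_iff, Set.mem_iInter, Set.mem_ofPred_eq]
  exact ⟨fun h => ⟨h.1, fun i hi => (h.2 i hi).2⟩, fun h => ⟨h.1, fun i hi => ⟨h.1, h.2 i hi⟩⟩⟩

theorem mem_facet {i : Fin m} {x : Fin n → ℝ} :
    x ∈ facet n m a b i ↔
      (∀ i, 0 ≤ (∑ j, a i j * x j) + b i) ∧ (∑ j, a i j * x j) + b i = 0 := Iff.rfl

theorem cell_subset_faceOf {S T : Finset (Fin m)} (h : S ⊆ T) :
    cell n m a b T ⊆ faceOf n m a b S := fun x hx => mem_faceOf.2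
  ⟨fun i => if hi : i ∈ T then (hx.1 i hi).ge else (hx.2 i hi).le, fun i hi => hx.1 i (h hi)⟩

theorem eq_of_mem_cell {T : Finset (Fin m)} {x : Fin n → ℝ} (hx : x ∈ cell n m a b T) :
    T = Finset.univ.filter fun i => (∑ j, a i j * x j) + b i = 0 := by
  ext i
  simp only [Finset.mem_filter, Finset.mem_univ, true_and]
  exact ⟨hx.1 i, fun h => by_contra fun hi => (hx.2 i hi).ne' h⟩

theorem convex_faceOf (S : Finset (Fin m)) : Convex ℝ (faceOf n m a b S) := by
  intro x hx y hy r s hr hs hrs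
  rw [mem_faceOf] at *
  refine ⟨fun i => ?_, fun i hi => ?_⟩
  · rw [constraint_combo i x y hrs]
    exact add_nonneg (mul_nonneg hr (hx.1 i)) (mul_nonneg hs (hy.1 i))
  · rw [constraint_combo i x y hrs, hx.2 i hi, hy.2 i hi]
    ring

theorem isClosed_faceOf (S : Finset (Fin m)) : IsClosed (faceOf n m a b S) := by
  have : faceOf n m a b S = (⋂ i, {x | 0 ≤ (∑ j, a i j * x j) + b i}) ∩
      ⋂ i ∈ S, {x | (∑ j, a i j * x j) + b i = 0} := by
    ext x; simp [mem_faceOf]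
  rw [this]
  refine (isClosed_iInter fun i => isClosed_le continuous_const (by fun_prop)).inter
    (isClosed_biInter fun i _ => isClosed_eq (by fun_prop) continuous_const)

theorem iUnion_cell (S : Finset (Fin m)) :
    ⋃ T : {T : Finset (Fin m) // S ⊆ T}, cell n m a b T = faceOf n m a b S := by
  apply Set.Subset.antisymm
  · exact Set.iUnion_subset fun T => cell_subset_faceOf T.2
  · intro x hx
    rw [mem_faceOf] at hx
    refine Set.mem_iUnion.2
      ⟨⟨Finset.univ.filter fun i => (∑ j, a i j * x j) + b i = 0, ?_⟩, ?_, ?_⟩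
    · intro i hi
      simpa using hx.2 i hi
    · intro i hi
      simpa using hi
    · intro i hi
      exact lt_of_le_of_ne (hx.1 i) fun h => hi (by simpa using h.symm)

theorem sum_chi_cell (hcomp : IsCompact (polytope n m a b)) (S : Finset (Fin m)) :
    ∑ T ∈ Finset.univ.filter (fun T : Finset (Fin m) => S ⊆ T), chi (cell n m a b T) =
      if (faceOf n m a b S).Nonempty then 1 else 0 := by
  split_ifs with h
  · rw [Finset.sum_subtype (p := fun T => S ⊆ T) _ (by simp)]
    have hU := iUnion_cell (a := a) (b := b) S
    refine euler_relation _ ⊤ _ rfl (fun T => relOpen_cell _) ?_ ?_ ?_ ?_ ?_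
    · intro T T' hne
      refine Set.disjoint_left.2 fun x hx hx' => hne (Subtype.ext ?_)
      rw [eq_of_mem_cell hx, ← eq_of_mem_cell hx']
    · rw [hU]
      exact hcomp.of_isClosed_subset (isClosed_faceOf S) Set.inter_subset_left
    · rw [hU]; exact convex_faceOf S
    · simp
    · rwa [hU]
  · refine Finset.sum_eq_zero fun T hT => ?_
    rw [chi, if_neg]
    exact fun hne => h (hne.mono (cell_subset_faceOf (Finset.mem_filter.1 hT).2))

/-- The index set `σ̃(F)` of all facets containing `F`. -/
def tightIdx (n m : ℕ) (a : Fin m → Fin n → ℝ) (b : Fin m → ℝ) (F : Set (Fin n → ℝ)) :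
    Finset (Fin m) :=
  Finset.univ.filter fun i => F ⊆ facet n m a b i

theorem faceOf_tightIdx (S : Finset (Fin m)) :
    faceOf n m a b (tightIdx n m a b (faceOf n m a b S)) = faceOf n m a b S := by
  ext x
  constructor
  · intro hx
    rw [mem_faceOf] at hx ⊢
    refine ⟨hx.1, fun i hi => hx.2 i ?_⟩
    simp only [tightIdx, Finset.mem_filter, Finset.mem_univ, true_and]
    intro y hy
    rw [mem_faceOf] at hy
    exact mem_facet.2 ⟨hy.1, hy.2 i hi⟩
  · intro hx
    refine mem_faceOf.2 ⟨(mem_faceOf.1 hx).1, fun i hi => ?_⟩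
    exact (mem_facet.1 ((Finset.mem_filter.1 hi).2 hx)).2

/-- Averaging points that are slack for the individual constraints outside `σ̃(F)` gives a point of
`F` that is slack for all of them at once. -/
theorem cell_tightIdx_nonempty {S : Finset (Fin m)} (h : (faceOf n m a b S).Nonempty) :
    (cell n m a b (tightIdx n m a b (faceOf n m a b S))).Nonempty := by
  set F := faceOf n m a b S with hF
  have key : ∀ R : Finset (Fin m), (∀ i ∈ R, i ∉ tightIdx n m a b F) →
      ∃ x ∈ F, ∀ i ∈ R, 0 < (∑ j, a i j * x j) + b i := by
    intro R
    induction R using Finset.induction_on with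
    | empty => intro _; exact ⟨h.some, h.some_mem, by simp⟩
    | insert k R hk ih =>
      intro hR
      obtain ⟨x, hx, hxR⟩ := ih fun i hi => hR i (Finset.mem_insert_of_mem hi)
      have hk' := hR k (Finset.mem_insert_self k R)
      simp only [tightIdx, Finset.mem_filter, Finset.mem_univ, true_and, Set.not_subset] at hk'
      obtain ⟨y, hy, hyk⟩ := hk'
      have hx0 := (mem_faceOf.1 hx).1
      have hy0 := (mem_faceOf.1 hy).1
      have hyk' : 0 < (∑ j, a k j * y j) + b k :=
        lt_of_le_of_ne (hy0 k) fun e => hyk (mem_facet.2 ⟨hy0, e.symm⟩)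
      have hhalf : (1 / 2 : ℝ) + 1 / 2 = 1 := by norm_num
      refine ⟨(1 / 2 : ℝ) • x + (1 / 2 : ℝ) • y,
        convex_faceOf S hx hy (by norm_num) (by norm_num) hhalf, fun i hi => ?_⟩
      rw [constraint_combo i x y hhalf]
      rcases Finset.mem_insert.1 hi with rfl | hi
      · linarith [hx0 i]
      · linarith [hxR i hi, hy0 i]
  obtain ⟨x, hx, hxR⟩ := key (tightIdx n m a b F)ᶜ fun i hi => Finset.mem_compl.1 hi
  refine ⟨x, fun i hi => ?_, fun i hi => hxR i (Finset.mem_compl.2 hi)⟩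
  exact (mem_facet.1 ((Finset.mem_filter.1 hi).2 hx)).2

theorem tightIdx_faceOf {T : Finset (Fin m)} (h : (cell n m a b T).Nonempty) :
    tightIdx n m a b (faceOf n m a b T) = T := by
  obtain ⟨x, hx⟩ := h
  ext i
  simp only [tightIdx, Finset.mem_filter, Finset.mem_univ, true_and]
  refine ⟨fun hi => ?_, fun hi y hy => ?_⟩
  · rw [eq_of_mem_cell hx]
    simpa using (mem_facet.1 (hi (cell_subset_faceOf le_rfl hx))).2
  · exact mem_facet.2 ⟨(mem_faceOf.1 hy).1, (mem_faceOf.1 hy).2 i hi⟩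

/-- A face is squeezed between its relative interior and the affine span of the latter, so both have
the same dimension. -/
theorem sdim_faceOf {T : Finset (Fin m)} (h : (cell n m a b T).Nonempty) :
    sdim (faceOf n m a b T) = sdim (cell n m a b T) := by
  obtain ⟨x, hx⟩ := h
  have h1 : (affineSpan ℝ (cell n m a b T)).direction = (tightSpace n m a b T).direction := by
    rw [cell_eq]
    exact direction_affineSpan_inter (isOpen_slackSet T) hx.1 hx.2
  have h2 : (affineSpan ℝ (faceOf n m a b T)).direction ≤ (tightSpace n m a b T).direction :=
    AffineSubspace.direction_le (affineSpan_le.2 fun y hy => (mem_faceOf.1 hy).2)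
  have h3 : (affineSpan ℝ (cell n m a b T)).direction ≤
      (affineSpan ℝ (faceOf n m a b T)).direction :=
    AffineSubspace.direction_le (affineSpan_mono ℝ (cell_subset_faceOf le_rfl))
  rw [sdim, sdim, le_antisymm (h2.trans h1.ge) h3]

/-- Faces correspond to nonempty cells via `F ↦ σ̃(F)`. -/
theorem facePolynomial_eq :
    ∑ F ∈ facesFinset n m a b,
        (-1 : Polynomial ℤ) ^ sdim F * (Polynomial.X + 1) ^ mOf n m a b F =
      ∑ T : Finset (Fin m), (chi (cell n m a b T) : Polynomial ℤ) *
        (Polynomial.X + 1) ^ T.card := by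
  have hr : ∑ T : Finset (Fin m), (chi (cell n m a b T) : Polynomial ℤ) *
        (Polynomial.X + 1) ^ T.card =
      ∑ T ∈ Finset.univ.filter (fun T : Finset (Fin m) => (cell n m a b T).Nonempty),
        (-1 : Polynomial ℤ) ^ sdim (cell n m a b T) * (Polynomial.X + 1) ^ T.card := by
    rw [Finset.sum_filter]
    refine Finset.sum_congr rfl fun T _ => ?_
    rw [chi]
    split_ifs <;> simp
  rw [hr]
  refine Finset.sum_bij' (fun F _ => tightIdx n m a b F) (fun T _ => faceOf n m a b T)
    ?_ ?_ ?_ ?_ ?_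
  · intro F hF
    obtain ⟨S, hS, rfl⟩ := Finset.mem_image.1 hF
    simpa using cell_tightIdx_nonempty (Finset.mem_filter.1 hS).2
  · intro T hT
    have hT' := (Finset.mem_filter.1 hT).2
    exact Finset.mem_image.2 ⟨T, by simpa using hT'.mono (cell_subset_faceOf le_rfl), rfl⟩
  · intro F hF
    obtain ⟨S, hS, rfl⟩ := Finset.mem_image.1 hF
    exact faceOf_tightIdx S
  · intro T hT
    exact tightIdx_faceOf (Finset.mem_filter.1 hT).2
  · intro F hF
    obtain ⟨S, hS, rfl⟩ := Finset.mem_image.1 hF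
    have := sdim_faceOf (cell_tightIdx_nonempty (Finset.mem_filter.1 hS).2)
    rw [faceOf_tightIdx] at this
    rw [this]
    rfl

end Faces

/-- `f_{K_P}(t) = F_P(-1, t+1)`: the f-polynomial of the nerve complex `K_P` equals
`Σ_F (-1)^{dim F} (t+1)^{m(F)}`, the sum over all nonempty faces `F` of `P`
(including `P` itself). -/
theorem fPoly_nerve_eq_facePolynomial
    (n m : ℕ) (hn : 1 ≤ n) (hm : 1 ≤ m)
    (a : Fin m → Fin n → ℝ) (b : Fin m → ℝ)
    (hcomp : IsCompact (polytope n m a b))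
    (hint : (interior (polytope n m a b)).Nonempty)
    (hfacet : ∀ i, sdim (facet n m a b i) = n - 1)
    (hdist : ∀ i j : Fin m, i ≠ j → facet n m a b i ≠ facet n m a b j) :
    ∑ S ∈ Finset.univ.filter (fun S : Finset (Fin m) => (faceOf n m a b S).Nonempty),
        (Polynomial.X : Polynomial ℤ) ^ S.card =
      ∑ F ∈ facesFinset n m a b,
        (-1 : Polynomial ℤ) ^ sdim F * (Polynomial.X + 1) ^ mOf n m a b F := by
  rw [facePolynomial_eq]
  have hexp : ∀ T : Finset (Fin m), (Polynomial.X + 1 : Polynomial ℤ) ^ T.card =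
      ∑ S : Finset (Fin m), if S ⊆ T then Polynomial.X ^ S.card else 0 := by
    intro T
    rw [← Finset.sum_pow_mul_eq_add_pow, ← Finset.sum_filter]
    refine Finset.sum_congr (by ext; simp) fun S _ => by simp
  simp_rw [hexp, Finset.mul_sum]
  rw [Finset.sum_comm, Finset.sum_filter]
  refine Finset.sum_congr rfl fun S _ => ?_
  have h := congrArg (Int.cast : ℤ → Polynomial ℤ) (sum_chi_cell hcomp S)
  rw [Int.cast_sum, Finset.sum_filter] at h
  calc (if (faceOf n m a b S).Nonempty then (Polynomial.X : Polynomial ℤ) ^ S.card else 0)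
      = (((if (faceOf n m a b S).Nonempty then 1 else 0 : ℤ)) : Polynomial ℤ) *
          Polynomial.X ^ S.card := by split_ifs <;> simp
    _ = _ := by
      rw [← h, Finset.sum_mul]
      refine Finset.sum_congr rfl fun T _ => ?_
      split_ifs <;> simp
end
end

section
/- Let P ⊂ ℝ^n be a convex polytope as in the context. A subset S ⊆ {1,…,m} is a maximal (under inclusion) element of the nerve complex K_P if and only if there is an extreme point v of P with S = {i : v ∈ F_i}; moreover, the assignment v ↦ {i : v ∈ F_i} is a bijection from the set of extreme points (vertices) of P onto the set of maximal elements of K_P. -/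
/-!
The theorem rests on two facts about the slacks `ℓ i x = ⟨a i, x⟩ + b i`.

* An extreme point `v` is the only point of `P` lying on every facet through `v`
  (`eq_of_sigmaPt_subset`). If `w ∈ P` lies on all those facets, the segment from `w` to `v` can be
  prolonged a little past `v` inside `P`, since the slacks vanishing at `v` stay zero along the line
  and the finitely many others are positive at `v`. Extremality then forces `w = v`. Hence
  `σ̃(v)` is maximal in the nerve, and `σ̃` is injective on extreme points.
* A nonempty face `faceOf S` is a compact extreme subset of `P` (`isExtreme_faceOf`), so by
  Krein-Milman it contains an
  extreme point `v` of `P`, and `S ⊆ σ̃(v)`. If `S` is maximal, equality holds.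
-/

noncomputable section
open scoped Classical

/-- Membership in the nerve complex `K_P`. -/
def inNerve (n m : ℕ) (a : Fin m → Fin n → ℝ) (b : Fin m → ℝ) (S : Finset (Fin m)) : Prop :=
  (faceOf n m a b S).Nonempty

/-- `σ̃(v) = {i : v ∈ F_i}`, for a point `v` of `P`. -/
def sigmaPt (n m : ℕ) (a : Fin m → Fin n → ℝ) (b : Fin m → ℝ) (v : Fin n → ℝ) :
    Finset (Fin m) :=
  Finset.univ.filter fun i => v ∈ facet n m a b i

/-- The slack of the `i`-th inequality is affine along lines. -/
lemma slack_comb {n m : ℕ} (a : Fin m → Fin n → ℝ) (b : Fin m → ℝ) (i : Fin m)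
    (x y : Fin n → ℝ) (s t : ℝ) (hst : s + t = 1) :
    (∑ j, a i j * (s • x + t • y) j) + b i =
      s * ((∑ j, a i j * x j) + b i) + t * ((∑ j, a i j * y j) + b i) := by
  have h : (∑ j, a i j * (s • x + t • y) j) =
      s * (∑ j, a i j * x j) + t * (∑ j, a i j * y j) := by
    rw [Finset.mul_sum, Finset.mul_sum, ← Finset.sum_add_distrib]
    refine Finset.sum_congr rfl fun j _ => ?_
    simp only [Pi.add_apply, Pi.smul_apply, smul_eq_mul]
    ring
  rw [h]
  linear_combination (-b i) * hst

lemma mem_sigmaPt {n m : ℕ} {a : Fin m → Fin n → ℝ} {b : Fin m → ℝ} {v : Fin n → ℝ} {i : Fin m} :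
    i ∈ sigmaPt n m a b v ↔ v ∈ facet n m a b i := by
  simp [sigmaPt]

lemma mem_faceOf_iff {n m : ℕ} {a : Fin m → Fin n → ℝ} {b : Fin m → ℝ} {S : Finset (Fin m)}
    {v : Fin n → ℝ} :
    v ∈ faceOf n m a b S ↔ v ∈ polytope n m a b ∧ S ⊆ sigmaPt n m a b v := by
  simp [faceOf, Finset.subset_iff, mem_sigmaPt]

/-- An extreme point is determined, among all points of `P`, by the facets containing it. -/
lemma eq_of_sigmaPt_subset {n m : ℕ} {a : Fin m → Fin n → ℝ} {b : Fin m → ℝ} {v w : Fin n → ℝ}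
    (hv : v ∈ (polytope n m a b).extremePoints ℝ) (hw : w ∈ polytope n m a b)
    (hvw : sigmaPt n m a b v ⊆ sigmaPt n m a b w) : w = v := by
  -- Prolong the segment from `w` to `v` beyond `v`, staying in `P`.
  have hev : ∀ᶠ ε : ℝ in nhdsWithin 0 (Set.Ioi 0),
      (1 + ε) • v + (-ε) • w ∈ polytope n m a b := by
    simp only [polytope, Set.mem_ofPred_eq]
    refine Filter.eventually_all.2 fun i => ?_
    have key : ∀ ε : ℝ, (∑ j, a i j * ((1 + ε) • v + (-ε) • w) j) + b i =
        (1 + ε) * ((∑ j, a i j * v j) + b i) + (-ε) * ((∑ j, a i j * w j) + b i) :=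
      fun ε => slack_comb a b i v w (1 + ε) (-ε) (by ring)
    simp only [key]
    rcases (hv.1 i).eq_or_lt with h0 | hpos
    · have hwi := (mem_sigmaPt.1 (hvw (mem_sigmaPt.2 ⟨hv.1, h0.symm⟩))).2
      simp [← h0, hwi]
    · apply Filter.Eventually.filter_mono nhdsWithin_le_nhds
      have hc : Continuous fun ε : ℝ =>
          (1 + ε) * ((∑ j, a i j * v j) + b i) + (-ε) * ((∑ j, a i j * w j) + b i) := by
        fun_prop
      have := (hc.tendsto 0).eventually (lt_mem_nhds (a := 0) (by simpa using hpos))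
      exact this.mono fun _ h => le_of_lt h
  obtain ⟨ε, hε, hpos⟩ := (hev.and self_mem_nhdsWithin).exists
  have hpos : 0 < ε := hpos
  refine hv.2 hw hε ⟨ε / (1 + ε), 1 / (1 + ε), by positivity, by positivity, by field_simp; ring, ?_⟩
  ext j
  simp only [Pi.add_apply, Pi.smul_apply, smul_eq_mul]
  field_simp
  ring

/-- Every face `faceOf S` is an extreme subset of `P`: a nonnegative slack that vanishes inside an
open segment vanishes at its endpoints. -/
lemma isExtreme_faceOf {n m : ℕ} (a : Fin m → Fin n → ℝ) (b : Fin m → ℝ) (S : Finset (Fin m)) :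
    IsExtreme ℝ (polytope n m a b) (faceOf n m a b S) := by
  refine ⟨Set.inter_subset_left, ?_⟩
  rintro x hx y hy z hz ⟨s, t, hs, ht, hst, rfl⟩
  rw [mem_faceOf_iff] at hz ⊢
  refine ⟨hx, fun i hi => mem_sigmaPt.2 ⟨hx, ?_⟩⟩
  have h := (mem_sigmaPt.1 (hz.2 hi)).2
  rw [slack_comb a b i x y s t hst] at h
  have h1 := mul_nonneg hs.le (hx i)
  have h2 := mul_nonneg ht.le (hy i)
  have h3 : s * ((∑ j, a i j * x j) + b i) = 0 := by linarith
  exact (mul_eq_zero.1 h3).resolve_left hs.ne'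

lemma isClosed_facet {n m : ℕ} (a : Fin m → Fin n → ℝ) (b : Fin m → ℝ)
    (hP : IsClosed (polytope n m a b)) (i : Fin m) : IsClosed (facet n m a b i) :=
  hP.inter (isClosed_eq (by fun_prop) continuous_const)

/-- A subset `S ⊆ {1,…,m}` is a maximal element of the nerve complex `K_P` iff
`S = {i : v ∈ F_i}` for some extreme point `v` of `P`; moreover
`v ↦ {i : v ∈ F_i}` is a bijection from the extreme points of `P` onto the
maximal elements of `K_P`. -/
theorem maximal_nerve_iff_vertex
    (n m : ℕ) (hn : 1 ≤ n) (hm : 1 ≤ m)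
    (a : Fin m → Fin n → ℝ) (b : Fin m → ℝ)
    (hcomp : IsCompact (polytope n m a b))
    (hint : (interior (polytope n m a b)).Nonempty)
    (hfacet : ∀ i, sdim (facet n m a b i) = n - 1)
    (hdist : ∀ i j : Fin m, i ≠ j → facet n m a b i ≠ facet n m a b j) :
    (∀ S : Finset (Fin m),
      (inNerve n m a b S ∧ ∀ T : Finset (Fin m), inNerve n m a b T → S ⊆ T → S = T) ↔
      ∃ v ∈ (polytope n m a b).extremePoints ℝ, S = sigmaPt n m a b v) ∧
    Set.BijOn (sigmaPt n m a b) ((polytope n m a b).extremePoints ℝ)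
      {S : Finset (Fin m) |
        inNerve n m a b S ∧ ∀ T : Finset (Fin m), inNerve n m a b T → S ⊆ T → S = T} := by
  have hmax : ∀ v ∈ (polytope n m a b).extremePoints ℝ, inNerve n m a b (sigmaPt n m a b v) ∧
      ∀ T : Finset (Fin m), inNerve n m a b T → sigmaPt n m a b v ⊆ T →
        sigmaPt n m a b v = T := by
    intro v hv
    refine ⟨⟨v, mem_faceOf_iff.2 ⟨hv.1, subset_rfl⟩⟩, ?_⟩
    rintro T ⟨w, hw⟩ hT
    rw [mem_faceOf_iff] at hw
    obtain rfl := eq_of_sigmaPt_subset hv hw.1 (hT.trans hw.2)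
    exact hT.antisymm hw.2
  have hex : ∀ S : Finset (Fin m),
      (inNerve n m a b S ∧ ∀ T : Finset (Fin m), inNerve n m a b T → S ⊆ T → S = T) →
      ∃ v ∈ (polytope n m a b).extremePoints ℝ, S = sigmaPt n m a b v := by
    rintro S ⟨hS, hSmax⟩
    have hc : IsCompact (faceOf n m a b S) := hcomp.inter_right
      (isClosed_biInter fun i _ => isClosed_facet a b hcomp.isClosed i)
    obtain ⟨v, hv⟩ := hc.extremePoints_nonempty hS
    have hvS := mem_faceOf_iff.1 hv.1
    exact ⟨v, (isExtreme_faceOf a b S).extremePoints_subset_extremePoints hv,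
      hSmax _ ⟨v, mem_faceOf_iff.2 ⟨hvS.1, subset_rfl⟩⟩ hvS.2⟩
  refine ⟨fun S => ⟨hex S, ?_⟩, hmax, ?_, ?_⟩
  · rintro ⟨v, hv, rfl⟩
    exact hmax v hv
  · intro v hv w hw h
    exact eq_of_sigmaPt_subset hw hv.1 h.symm.subset
  · intro S hS
    obtain ⟨v, hv, h⟩ := hex S hS
    exact ⟨v, hv, h.symm⟩
end
end

section
/- Let K be a finite abstract simplicial complex on {1,…,m} and let σ ∈ F(K) be a face simplex. Then for every τ with τ ∩ σ = ∅: (a) τ is a maximal simplex of link_K σ if and only if σ ∪ τ is a maximal simplex of K; and (b) τ is a face simplex of link_K σ if and only if σ ∪ τ is a face simplex of K. Consequently τ ↦ σ ∪ τ is an inclusion-preserving bijection from F(link_K σ) onto {ρ ∈ F(K) : ρ ⊇ σ}. -/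
/-!
The maximal simplices of `linkK K σ` are exactly the sets `s \ σ` with `s` a maximal simplex of `K`
containing `σ`: if `σ ∪ τ ⊆ ρ ∈ K`, then `ρ \ σ` is a simplex of the link containing `τ`
(`isMaxSimplex_link_iff`). Adjoining or removing `σ` commutes with nonempty intersections, and every
member of a family of maximal simplices with intersection `σ ∪ τ` contains `σ`; so such families
correspond to families of maximal simplices of the link with intersection `τ`
(`isFaceSimplex_link_iff`). The bijection then follows because face simplices of the link are
disjoint from `σ`, so that `ρ ↦ ρ \ σ` inverts `τ ↦ σ ∪ τ`.
-/


noncomputable section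
open scoped Classical
open Polynomial

theorem mem_linkK {m : ℕ} {K : Finset (Finset (Fin m))} {σ τ : Finset (Fin m)} :
    τ ∈ linkK K σ ↔ τ ∩ σ = ∅ ∧ τ ∪ σ ∈ K := by
  simp [linkK]

theorem mem_inf_id {m : ℕ} {S : Finset (Finset (Fin m))} {x : Fin m} :
    x ∈ S.inf id ↔ ∀ s ∈ S, x ∈ s := by
  rw [← Finset.singleton_subset_iff, Finset.le_inf_iff]
  simp

theorem isMaxSimplex_link_iff {m : ℕ} {K : Finset (Finset (Fin m))} {σ τ : Finset (Fin m)}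
    (h : τ ∩ σ = ∅) : IsMaxSimplex (linkK K σ) τ ↔ IsMaxSimplex K (σ ∪ τ) := by
  constructor
  · rintro ⟨h₁, h₂⟩
    rw [mem_linkK, Finset.union_comm] at h₁
    refine ⟨h₁.2, fun ρ hρ hle => ?_⟩
    obtain ⟨hσρ, hτρ⟩ := Finset.union_subset_iff.1 hle
    have hd : Disjoint τ σ := Finset.disjoint_iff_inter_eq_empty.2 h
    have hlink : ρ \ σ ∈ linkK K σ := by
      rw [mem_linkK, Finset.sdiff_union_of_subset hσρ]
      exact ⟨Finset.sdiff_inter_self _ _, hρ⟩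
    rw [h₂ _ hlink (Finset.subset_sdiff.2 ⟨hτρ, hd⟩), Finset.union_sdiff_of_subset hσρ]
  · rintro ⟨h₁, h₂⟩
    refine ⟨mem_linkK.2 ⟨h, Finset.union_comm σ τ ▸ h₁⟩, fun ρ hρ hle => ?_⟩
    obtain ⟨hd, hρK⟩ := mem_linkK.1 hρ
    rw [Finset.union_comm] at hρK
    have he := h₂ _ hρK (Finset.union_subset_union_right hle)
    refine hle.antisymm fun x hx => ?_
    have hxσ : x ∉ σ := fun hxσ => by
      exact Finset.notMem_empty x (hd ▸ Finset.mem_inter.2 ⟨hx, hxσ⟩)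
    exact (Finset.mem_union.1 (he ▸ Finset.mem_union_right σ hx)).resolve_left hxσ

theorem inter_eq_empty_of_isFaceSimplex_link {m : ℕ} {K : Finset (Finset (Fin m))}
    {σ τ : Finset (Fin m)} (h : IsFaceSimplex (linkK K σ) τ) : τ ∩ σ = ∅ := by
  obtain ⟨S, ⟨s, hs⟩, hS, rfl⟩ := h
  have hle : S.inf id ⊆ s := fun x hx => mem_inf_id.1 hx s hs
  exact Finset.subset_empty.1
    ((mem_linkK.1 (hS s hs).1).1 ▸ Finset.inter_subset_inter_right hle)

theorem isFaceSimplex_link_iff {m : ℕ} {K : Finset (Finset (Fin m))} {σ τ : Finset (Fin m)}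
    (h : τ ∩ σ = ∅) : IsFaceSimplex (linkK K σ) τ ↔ IsFaceSimplex K (σ ∪ τ) := by
  constructor
  · rintro ⟨S, hne, hS, rfl⟩
    refine ⟨S.image (σ ∪ ·), hne.image _, ?_, ?_⟩
    · intro t ht
      obtain ⟨s, hs, rfl⟩ := Finset.mem_image.1 ht
      exact (isMaxSimplex_link_iff (mem_linkK.1 (hS s hs).1).1).1 (hS s hs)
    · ext x
      simp only [Finset.mem_union, mem_inf_id, Finset.forall_mem_image]
      by_cases hx : x ∈ σ <;> simp [hx]
  · rintro ⟨S, hne, hS, he⟩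
    have hsub : ∀ s ∈ S, σ ⊆ s := fun s hs x hx =>
      mem_inf_id.1 (he ▸ Finset.mem_union_left τ hx) s hs
    refine ⟨S.image (· \ σ), hne.image _, ?_, ?_⟩
    · intro t ht
      obtain ⟨s, hs, rfl⟩ := Finset.mem_image.1 ht
      rw [isMaxSimplex_link_iff (Finset.sdiff_inter_self _ _),
        Finset.union_sdiff_of_subset (hsub s hs)]
      exact hS s hs
    · ext x
      have hx : x ∈ σ ∪ τ ↔ ∀ s ∈ S, x ∈ s := by rw [he, mem_inf_id]
      have hd : x ∈ τ → x ∉ σ := fun h₁ h₂ => by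
        exact Finset.notMem_empty x (h ▸ Finset.mem_inter.2 ⟨h₁, h₂⟩)
      obtain ⟨s, hs⟩ := hne
      simp only [mem_inf_id, Finset.forall_mem_image, Finset.mem_sdiff]
      rw [Finset.mem_union] at hx
      exact ⟨fun h₁ t ht => ⟨hx.1 (Or.inr h₁) t ht, hd h₁⟩,
        fun h₁ => (hx.2 fun t ht => (h₁ ht).1).resolve_left (h₁ hs).2⟩

/-- For a face simplex `σ` of `K` and any `τ` disjoint from `σ`:
`τ` is maximal in `link_K σ` iff `σ ∪ τ` is maximal in `K`, and
`τ` is a face simplex of `link_K σ` iff `σ ∪ τ` is a face simplex of `K`.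
Consequently `τ ↦ σ ∪ τ` is an inclusion-preserving bijection from
`F(link_K σ)` onto `{ρ ∈ F(K) : σ ⊆ ρ}`. -/
theorem faceSimplices_of_link (m : ℕ) (K : Finset (Finset (Fin m)))
    (hK : IsSimplicialComplex K)
    (σ : Finset (Fin m)) (hσ : IsFaceSimplex K σ) :
    (∀ τ : Finset (Fin m), τ ∩ σ = ∅ →
      ((IsMaxSimplex (linkK K σ) τ ↔ IsMaxSimplex K (σ ∪ τ)) ∧
       (IsFaceSimplex (linkK K σ) τ ↔ IsFaceSimplex K (σ ∪ τ)))) ∧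
    Set.BijOn (fun τ => σ ∪ τ)
      {τ | IsFaceSimplex (linkK K σ) τ}
      {ρ | IsFaceSimplex K ρ ∧ σ ⊆ ρ} ∧
    (∀ τ₁ τ₂ : Finset (Fin m), IsFaceSimplex (linkK K σ) τ₁ →
      IsFaceSimplex (linkK K σ) τ₂ → (τ₁ ⊆ τ₂ ↔ σ ∪ τ₁ ⊆ σ ∪ τ₂)) := by
  have hsub : ∀ τ₁ τ₂ : Finset (Fin m), IsFaceSimplex (linkK K σ) τ₁ →
      IsFaceSimplex (linkK K σ) τ₂ → (τ₁ ⊆ τ₂ ↔ σ ∪ τ₁ ⊆ σ ∪ τ₂) := by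
    intro τ₁ τ₂ h₁ _
    refine ⟨Finset.union_subset_union_right, fun hle x hx => ?_⟩
    have hxσ : x ∉ σ := fun hxσ => by
      exact Finset.notMem_empty x
        (inter_eq_empty_of_isFaceSimplex_link h₁ ▸ Finset.mem_inter.2 ⟨hx, hxσ⟩)
    exact (Finset.mem_union.1 (hle (Finset.mem_union_right σ hx))).resolve_left hxσ
  refine ⟨fun τ h => ⟨isMaxSimplex_link_iff h, isFaceSimplex_link_iff h⟩, ⟨?_, ?_, ?_⟩, hsub⟩
  · intro τ hτ
    exact ⟨(isFaceSimplex_link_iff (inter_eq_empty_of_isFaceSimplex_link hτ)).1 hτ,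
      Finset.subset_union_left⟩
  · intro τ₁ h₁ τ₂ h₂ he
    exact ((hsub τ₁ τ₂ h₁ h₂).2 (Finset.subset_of_eq he)).antisymm
      ((hsub τ₂ τ₁ h₂ h₁).2 (Finset.subset_of_eq he.symm))
  · rintro ρ ⟨hρ, hle⟩
    have hu : σ ∪ ρ \ σ = ρ := Finset.union_sdiff_of_subset hle
    exact ⟨ρ \ σ, (isFaceSimplex_link_iff (Finset.sdiff_inter_self _ _)).2 (hu.symm ▸ hρ), hu⟩
end
end

section
/- Let K be a finite abstract simplicial complex on {1,…,m} and σ ∈ K. Let σ̂ be the intersection of all face simplices of K containing σ. Then link_K σ = {ρ ∪ τ : ρ ⊆ σ̂ \ σ and τ ∈ link_K σ̂}; that is, link_K σ is the join of link_K σ̂ with the full simplex on the vertex set σ̂ \ σ. -/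
/-! Every simplex containing `σ` extends to a maximal simplex `M ⊇ σ`, and such an `M` is itself a
face simplex, so `σ̂ ⊆ M`. Hence adjoining `σ̂` to a simplex containing `σ` again gives a simplex
(`union_hatSimplex_mem`). A member `υ` of `link_K σ` therefore splits as
`(υ ∩ σ̂) ∪ (υ \ σ̂)` with the second part in `link_K σ̂`; the converse is closure of `K` under
subsets, using `σ ⊆ σ̂`. -/

noncomputable section
open scoped Classical
open Polynomial

/-- `σ̂`: the intersection of all face simplices of `K` containing `σ`
(the minimal face simplex containing `σ`). -/
def hatSimplex {m : ℕ} (K : Finset (Finset (Fin m))) (σ : Finset (Fin m)) :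
    Finset (Fin m) :=
  (Finset.univ.filter fun ρ => IsFaceSimplex K ρ ∧ σ ⊆ ρ).inf id

theorem subset_hatSimplex {m : ℕ} (K : Finset (Finset (Fin m))) (σ : Finset (Fin m)) :
    σ ⊆ hatSimplex K σ :=
  Finset.le_inf fun _ hρ => (Finset.mem_filter.mp hρ).2.2

theorem hatSimplex_subset_of_isMaxSimplex {m : ℕ} {K : Finset (Finset (Fin m))}
    {σ M : Finset (Fin m)} (hM : IsMaxSimplex K M) (h : σ ⊆ M) : hatSimplex K σ ⊆ M :=
  Finset.inf_le (f := id) <| Finset.mem_filter.mpr ⟨Finset.mem_univ _,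
    ⟨{M}, Finset.singleton_nonempty M, by simpa using hM, by simp⟩, h⟩

theorem exists_isMaxSimplex_superset {m : ℕ} {K : Finset (Finset (Fin m))}
    {α : Finset (Fin m)} (hα : α ∈ K) : ∃ M, IsMaxSimplex K M ∧ α ⊆ M := by
  obtain ⟨M, hαM, hM⟩ := K.exists_le_maximal hα
  exact ⟨M, ⟨hM.prop, fun τ hτ h => hM.eq_of_le hτ h⟩, hαM⟩

theorem union_hatSimplex_mem {m : ℕ} {K : Finset (Finset (Fin m))}
    (hK : IsSimplicialComplex K) {σ α : Finset (Fin m)} (hα : α ∈ K) (h : σ ⊆ α) :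
    α ∪ hatSimplex K σ ∈ K := by
  obtain ⟨M, hM, hαM⟩ := exists_isMaxSimplex_superset hα
  exact hK.2 M hM.1 _
    (Finset.union_subset hαM (hatSimplex_subset_of_isMaxSimplex hM (h.trans hαM)))

/-- For `σ ∈ K`, the link of `σ` is the join of `link_K σ̂` with the full simplex on
the vertex set `σ̂ \ σ`: `link_K σ = {ρ ∪ τ : ρ ⊆ σ̂ \ σ, τ ∈ link_K σ̂}`. -/
theorem link_eq_join_hat (m : ℕ) (K : Finset (Finset (Fin m)))
    (hK : IsSimplicialComplex K) (σ : Finset (Fin m)) (hσ : σ ∈ K) :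
    ∀ υ : Finset (Fin m),
      υ ∈ linkK K σ ↔ ∃ ρ ⊆ hatSimplex K σ \ σ, ∃ τ ∈ linkK K (hatSimplex K σ), υ = ρ ∪ τ := by
  intro υ
  have hsub := subset_hatSimplex K σ
  simp only [linkK, Finset.mem_filter, Finset.mem_univ, true_and]
  constructor
  · rintro ⟨hdisj, hmem⟩
    have hbig := union_hatSimplex_mem hK hmem Finset.subset_union_right
    refine ⟨υ ∩ hatSimplex K σ, ?_, υ \ hatSimplex K σ, ⟨?_, hK.2 _ hbig _ ?_⟩, ?_⟩
    · intro x hx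
      have : x ∉ υ ∩ σ := by simp [hdisj]
      grind
    · exact Finset.sdiff_inter_self _ _
    · grind
    · grind
  · rintro ⟨ρ, hρ, τ, ⟨hdisj, hmem⟩, rfl⟩
    refine ⟨?_, hK.2 _ hmem _ ?_⟩
    · ext x
      have : x ∉ τ ∩ hatSimplex K σ := by simp [hdisj]
      grind
    · grind
end
end
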